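/- For every γ > 0 and all t, t' > 0, C_γ((t,0),(t',0)) = (4γ/√(2π)) · ( t^{1/2} + (t')^{1/2} − |t − t'|^{1/2} ). Consequently (2γ)^{-2} C_γ((t,0),(t',0)) = γ^{-1} (2π)^{-1/2} ( t^{1/2} + (t')^{1/2} − |t − t'|^{1/2} ), the covariance of (2/π)^{1/4} γ^{-1/2} times a fractional Brownian motion with Hurst parameter 1/4. -/

import Mathlib

/-!
At `x = 0` the kernels reduce to `Ψ_t(y,0) = 2 Q_t(y)`, with `Q_t(y) = 1 - Φ(y/√t)`, and
`q^N_t(y,0) = 2 q_t(y)`, and both integrals become explicit.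

* Integrating by parts, i.e. using the antiderivative
  `y Q_t Q_{t'} - t q_t Q_{t'} - t' q_{t'} Q_t` of `Q_t Q_{t'} + (t + t') q_t q_{t'}`, the first
  integral is `2 (2π)^{-1/2} (√t + √t' - √(t + t'))` (`integral_tail_mul`). The boundary term at
  infinity vanishes by Mills' inequality (`mul_tail_le`).
* Since `∫₀^∞ q_a q_b = (2π (a + b))^{-1/2} / 2` (`integral_heatKer_mul`), the second integral is
  `2 (2π)^{-1/2} ∫₀^{min(t,t')} (t + t' - 2s)^{-1/2} ds`, which equals
  `2 (2π)^{-1/2} (√(t + t') - √|t - t'|)` (`integral_time`).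

The terms `√(t + t')` cancel in the sum.
-/

open MeasureTheory

/-- The standard normal cumulative distribution function. -/
noncomputable def Phi (x : ℝ) : ℝ :=
  (Real.sqrt (2 * Real.pi))⁻¹ * ∫ y in Set.Iic x, Real.exp (-y ^ 2 / 2)

/-- The kernel `Ψ_t(y,x) = 2 − Φ((y−x)/√t) − Φ((y+x)/√t)`. -/
noncomputable def Psi (t y x : ℝ) : ℝ :=
  2 - Phi ((y - x) / Real.sqrt t) - Phi ((y + x) / Real.sqrt t)

/-- The one-dimensional heat kernel `q_t(z) = (2πt)^{-1/2} e^{-z²/(2t)}`. -/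
noncomputable def heatKer (t z : ℝ) : ℝ :=
  (Real.sqrt (2 * Real.pi * t))⁻¹ * Real.exp (-z ^ 2 / (2 * t))

/-- The Neumann heat kernel on the half-line, `q^N_t(y,x) = q_t(y−x) + q_t(y+x)`. -/
noncomputable def neumannKer (t y x : ℝ) : ℝ :=
  heatKer t (y - x) + heatKer t (y + x)

/-- The limiting covariance `C_γ((t,x),(t',x'))` of the Atlas fluctuation field. -/
noncomputable def limCov (γ t x t' x' : ℝ) : ℝ :=
  2 * γ * ((∫ y in Set.Ioi (0 : ℝ), Psi t y x * Psi t' y x') +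
    ∫ s in Set.Ioc (0 : ℝ) (min t t'),
      ∫ y in Set.Ioi (0 : ℝ), neumannKer (t - s) y x * neumannKer (t' - s) y x')

/-! ### The Gaussian tail -/

lemma integrable_gauss : Integrable (fun y : ℝ => Real.exp (-y ^ 2 / 2)) := by
  have h := integrable_exp_neg_mul_sq (b := 1 / 2) (by norm_num)
  refine h.congr (Filter.Eventually.of_forall fun x => ?_)
  simp only
  congr 1
  ring

lemma Phi_hasDerivAt (x : ℝ) :
    HasDerivAt Phi ((Real.sqrt (2 * Real.pi))⁻¹ * Real.exp (-x ^ 2 / 2)) x := by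
  have hc : Continuous (fun y : ℝ => Real.exp (-y ^ 2 / 2)) := by fun_prop
  have h := ((hc.integral_hasStrictDerivAt 0 x).hasDerivAt.add_const
    (∫ y in Set.Iic (0 : ℝ), Real.exp (-y ^ 2 / 2))).const_mul (Real.sqrt (2 * Real.pi))⁻¹
  refine h.congr_of_eventuallyEq (Filter.Eventually.of_forall fun u => ?_)
  have := intervalIntegral.integral_Iic_sub_Iic (integrable_gauss.integrableOn (s := Set.Iic 0))
    (integrable_gauss.integrableOn (s := Set.Iic u))
  simp only [Phi, ← this, sub_add_cancel]

lemma one_sub_Phi (x : ℝ) :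
    1 - Phi x = (Real.sqrt (2 * Real.pi))⁻¹ * ∫ y in Set.Ioi x, Real.exp (-y ^ 2 / 2) := by
  have h := intervalIntegral.integral_Iic_add_Ioi (integrable_gauss.integrableOn (s := Set.Iic x))
    (integrable_gauss.integrableOn (s := Set.Ioi x))
  have hg : ∫ y : ℝ, Real.exp (-y ^ 2 / 2) = Real.sqrt (2 * Real.pi) := by
    have := integral_gaussian (1 / 2)
    rw [show Real.pi / (1 / 2) = 2 * Real.pi by ring] at this
    rw [← this]
    congr 1
    ext y
    congr 1
    ring
  have hp : (Real.sqrt (2 * Real.pi)) ≠ 0 := by positivity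
  rw [hg] at h
  rw [Phi, eq_sub_of_add_eq' h]
  field_simp

lemma Phi_zero : Phi 0 = 1 / 2 := by
  have h := one_sub_Phi 0
  have hg : ∫ y in Set.Ioi (0 : ℝ), Real.exp (-y ^ 2 / 2) = Real.sqrt (2 * Real.pi) / 2 := by
    have := integral_gaussian_Ioi (1 / 2)
    rw [show Real.pi / (1 / 2) = 2 * Real.pi by ring] at this
    rw [← this]
    congr 1
    ext y
    congr 1
    ring
  have hp : (Real.sqrt (2 * Real.pi)) ≠ 0 := by positivity
  rw [hg] at h
  field_simp at h
  linarith

lemma tail_nonneg (x : ℝ) : 0 ≤ 1 - Phi x := by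
  rw [one_sub_Phi]
  have : 0 ≤ ∫ y in Set.Ioi x, Real.exp (-y ^ 2 / 2) := integral_nonneg fun y => by positivity
  positivity

lemma tendsto_gauss :
    Filter.Tendsto (fun x : ℝ => Real.exp (-x ^ 2 / 2)) Filter.atTop (nhds 0) := by
  apply Real.tendsto_exp_atBot.comp
  have h : Filter.Tendsto (fun x : ℝ => x ^ 2) Filter.atTop Filter.atTop :=
    Filter.tendsto_pow_atTop (by norm_num)
  have h2 := (Filter.tendsto_neg_atTop_atBot.comp h).atBot_div_const (show (0 : ℝ) < 2 by norm_num)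
  exact h2

lemma integrable_mul_gauss : Integrable (fun y : ℝ => y * Real.exp (-y ^ 2 / 2)) := by
  have h := integrable_mul_exp_neg_mul_sq (b := 1 / 2) (by norm_num)
  refine h.congr (Filter.Eventually.of_forall fun x => ?_)
  simp only
  congr 2
  ring

/-- Mills' inequality: on `(x, ∞)` one has `x e^{-u²/2} ≤ u e^{-u²/2}`, and the right side is
an exact derivative. -/
lemma mul_tail_le (x : ℝ) :
    x * (1 - Phi x) ≤ (Real.sqrt (2 * Real.pi))⁻¹ * Real.exp (-x ^ 2 / 2) := by
  have hd : ∀ u : ℝ, HasDerivAt (fun u : ℝ => -Real.exp (-u ^ 2 / 2))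
      (u * Real.exp (-u ^ 2 / 2)) u := by
    intro u
    have h := (((hasDerivAt_id u).pow 2).neg.div_const 2).exp.neg
    refine h.congr_deriv ?_
    simp
    ring
  have h1 : ∫ u in Set.Ioi x, u * Real.exp (-u ^ 2 / 2) = 0 - -Real.exp (-x ^ 2 / 2) := by
    refine integral_Ioi_of_hasDerivAt_of_tendsto (hd x).continuousAt.continuousWithinAt
      (fun u _ => hd u) integrable_mul_gauss.integrableOn ?_
    simpa using tendsto_gauss.neg
  have h2 : ∫ u in Set.Ioi x, x * Real.exp (-u ^ 2 / 2)
      ≤ ∫ u in Set.Ioi x, u * Real.exp (-u ^ 2 / 2) := by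
    refine setIntegral_mono_on (integrable_gauss.const_mul x).integrableOn
      integrable_mul_gauss.integrableOn measurableSet_Ioi fun u hu => ?_
    exact mul_le_mul_of_nonneg_right (le_of_lt hu) (by positivity)
  rw [h1, integral_const_mul] at h2
  rw [one_sub_Phi, mul_left_comm]
  exact mul_le_mul_of_nonneg_left (by linarith) (by positivity)

lemma tendsto_mul_tail :
    Filter.Tendsto (fun x : ℝ => x * (1 - Phi x)) Filter.atTop (nhds 0) := by
  refine squeeze_zero' ?_ (Filter.Eventually.of_forall mul_tail_le)
    (by simpa using tendsto_gauss.const_mul (Real.sqrt (2 * Real.pi))⁻¹)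
  filter_upwards [Filter.eventually_ge_atTop 0] with x hx
  exact mul_nonneg hx (tail_nonneg x)

lemma tendsto_tail : Filter.Tendsto (fun x : ℝ => 1 - Phi x) Filter.atTop (nhds 0) := by
  refine squeeze_zero' (Filter.Eventually.of_forall tail_nonneg) ?_ tendsto_mul_tail
  filter_upwards [Filter.eventually_ge_atTop 1] with x hx
  exact le_mul_of_one_le_left (tail_nonneg x) hx

/-! ### The heat kernel -/

lemma heatKer_eq {t : ℝ} (ht : 0 < t) (y : ℝ) :
    heatKer t y = (Real.sqrt (2 * Real.pi))⁻¹ * Real.exp (-(y / Real.sqrt t) ^ 2 / 2)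
      * (Real.sqrt t)⁻¹ := by
  rw [heatKer, Real.sqrt_mul (by positivity), div_pow, Real.sq_sqrt ht.le, mul_inv,
    show -y ^ 2 / (2 * t) = -(y ^ 2 / t) / 2 by field_simp]
  ring

lemma heatKer_nonneg (t y : ℝ) : 0 ≤ heatKer t y := by
  unfold heatKer
  positivity

lemma tail_hasDerivAt {t : ℝ} (ht : 0 < t) (y : ℝ) :
    HasDerivAt (fun y => 1 - Phi (y / Real.sqrt t)) (-heatKer t y) y := by
  have h := ((Phi_hasDerivAt (y / Real.sqrt t)).comp y
    ((hasDerivAt_id y).div_const (Real.sqrt t))).const_sub 1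
  refine h.congr_deriv ?_
  rw [heatKer_eq ht, one_div]

lemma heatKer_hasDerivAt (t y : ℝ) :
    HasDerivAt (fun y => heatKer t y) (-(y / t) * heatKer t y) y := by
  have h := ((((hasDerivAt_id y).pow 2).neg.div_const (2 * t)).exp).const_mul
    (Real.sqrt (2 * Real.pi * t))⁻¹
  refine h.congr_deriv ?_
  rcases eq_or_ne t 0 with rfl | ht
  · simp [heatKer]
  · simp [heatKer]
    field_simp

lemma tendsto_div_sqrt {t : ℝ} (ht : 0 < t) :
    Filter.Tendsto (fun y => y / Real.sqrt t) Filter.atTop Filter.atTop :=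
  Filter.tendsto_id.atTop_div_const (Real.sqrt_pos.2 ht)

lemma tendsto_heatKer {t : ℝ} (ht : 0 < t) :
    Filter.Tendsto (fun y => heatKer t y) Filter.atTop (nhds 0) := by
  simp only [heatKer_eq ht]
  simpa using ((tendsto_gauss.comp (tendsto_div_sqrt ht)).const_mul
    (Real.sqrt (2 * Real.pi))⁻¹).mul_const (Real.sqrt t)⁻¹

lemma heatKer_zero (t : ℝ) : heatKer t 0 = (Real.sqrt (2 * Real.pi * t))⁻¹ := by
  simp [heatKer]

/-- A product of two centred Gaussian densities is again Gaussian, so half of its total mass is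
explicit. -/
lemma integral_heatKer_mul {t t' : ℝ} (ht : 0 < t) (ht' : 0 < t') :
    ∫ y in Set.Ioi (0 : ℝ), heatKer t y * heatKer t' y
      = (Real.sqrt (2 * Real.pi))⁻¹ * (Real.sqrt (t + t'))⁻¹ / 2 := by
  have h : ∀ y, heatKer t y * heatKer t' y = ((Real.sqrt (2 * Real.pi * t))⁻¹ *
      (Real.sqrt (2 * Real.pi * t'))⁻¹) * Real.exp (-((t + t') / (2 * t * t')) * y ^ 2) := by
    intro y
    rw [heatKer, heatKer, mul_mul_mul_comm, ← Real.exp_add]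
    congr 2
    field_simp
    ring
  simp only [h]
  rw [integral_const_mul, integral_gaussian_Ioi, ← mul_div_assoc]
  congr 1
  rw [← Real.sqrt_inv, ← Real.sqrt_inv, ← Real.sqrt_inv, ← Real.sqrt_inv,
    ← Real.sqrt_mul (by positivity), ← Real.sqrt_mul (by positivity),
    ← Real.sqrt_mul (by positivity)]
  congr 1
  field_simp

lemma integrableOn_heatKer_mul {t t' : ℝ} (ht : 0 < t) (ht' : 0 < t') :
    IntegrableOn (fun y => heatKer t y * heatKer t' y) (Set.Ioi (0 : ℝ)) := by
  -- a non-integrable function would have integral `0`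
  refine _root_.not_imp_comm.1 integral_undef ?_
  rw [integral_heatKer_mul ht ht']
  positivity

/-! ### The two contributions to the covariance -/

/-- With `Q_t(y) = 1 - Φ(y/√t)`, the function `y Q_t Q_{t'} - t q_t Q_{t'} - t' q_{t'} Q_t` is an
antiderivative of `Q_t Q_{t'} + (t + t') q_t q_{t'}`. -/
lemma integral_tail_mul {t t' : ℝ} (ht : 0 < t) (ht' : 0 < t') :
    ∫ y in Set.Ioi (0 : ℝ), (1 - Phi (y / Real.sqrt t)) * (1 - Phi (y / Real.sqrt t'))
      = (Real.sqrt (2 * Real.pi))⁻¹ * (Real.sqrt t + Real.sqrt t' - Real.sqrt (t + t')) / 2 := by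
  set F : ℝ → ℝ := fun y =>
    y * (1 - Phi (y / Real.sqrt t)) * (1 - Phi (y / Real.sqrt t'))
      - t * heatKer t y * (1 - Phi (y / Real.sqrt t'))
      - t' * heatKer t' y * (1 - Phi (y / Real.sqrt t)) with hF
  have hd : ∀ y, HasDerivAt F ((1 - Phi (y / Real.sqrt t)) * (1 - Phi (y / Real.sqrt t'))
      + (t + t') * (heatKer t y * heatKer t' y)) y := by
    intro y
    have h := ((((hasDerivAt_id y).mul (tail_hasDerivAt ht y)).mul (tail_hasDerivAt ht' y)).sub
      (((heatKer_hasDerivAt t y).const_mul t).mul (tail_hasDerivAt ht' y))).sub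
      (((heatKer_hasDerivAt t' y).const_mul t').mul (tail_hasDerivAt ht y))
    refine h.congr_deriv ?_
    simp only [id, Pi.mul_apply]
    field_simp
    ring
  have hpos : ∀ y ∈ Set.Ioi (0 : ℝ), 0 ≤ (1 - Phi (y / Real.sqrt t)) *
      (1 - Phi (y / Real.sqrt t')) + (t + t') * (heatKer t y * heatKer t' y) := fun y _ =>
    add_nonneg (mul_nonneg (tail_nonneg _) (tail_nonneg _))
      (mul_nonneg (by positivity) (mul_nonneg (heatKer_nonneg _ _) (heatKer_nonneg _ _)))
  have hlim : Filter.Tendsto F Filter.atTop (nhds 0) := by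
    have hq := tendsto_tail.comp (tendsto_div_sqrt ht)
    have hq' := tendsto_tail.comp (tendsto_div_sqrt ht')
    have hm := (tendsto_mul_tail.comp (tendsto_div_sqrt ht)).const_mul (Real.sqrt t)
    have h := ((hm.mul hq').sub (((tendsto_heatKer ht).const_mul t).mul hq')).sub
      (((tendsto_heatKer ht').const_mul t').mul hq)
    simp only [mul_zero, sub_zero] at h
    refine h.congr fun y => ?_
    have : Real.sqrt t ≠ 0 := (Real.sqrt_pos.2 ht).ne'
    simp only [hF, Function.comp]
    rw [← mul_assoc (Real.sqrt t), mul_div_cancel₀ _ this]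
  have hcont := (hd 0).continuousAt.continuousWithinAt (s := Set.Ici 0)
  have hint := integrableOn_Ioi_deriv_of_nonneg hcont (fun y _ => hd y) hpos hlim
  have hI := integral_Ioi_of_hasDerivAt_of_nonneg hcont (fun y _ => hd y) hpos hlim
  have hk := (integrableOn_heatKer_mul ht ht').const_mul (t + t')
  have hQ : ∫ y in Set.Ioi (0 : ℝ), (1 - Phi (y / Real.sqrt t)) * (1 - Phi (y / Real.sqrt t'))
      = (0 - F 0) - (t + t') * ∫ y in Set.Ioi (0 : ℝ), heatKer t y * heatKer t' y := by
    rw [← hI, ← integral_const_mul, ← integral_sub hint hk]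
    simp
  have hs : ∀ {r : ℝ}, 0 < r → r * (Real.sqrt r)⁻¹ = Real.sqrt r := fun {r} hr => by
    rw [← div_eq_mul_inv, Real.div_sqrt]
  rw [hQ, integral_heatKer_mul ht ht']
  simp only [hF, heatKer_zero, zero_div, Phi_zero, Real.sqrt_mul (show 0 ≤ 2 * Real.pi by positivity),
    mul_inv]
  linear_combination
    (Real.sqrt (2 * Real.pi))⁻¹ / 2 * (hs ht + hs ht' - hs (add_pos ht ht'))

/-- The time integral: `-√(t + t' - 2s)` is an antiderivative of `(t + t' - 2s)^{-1/2}`, whose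
nonnegativity gives integrability despite the singularity at the endpoint when `t = t'`. -/
lemma integral_time {t t' : ℝ} (ht : 0 < t) (ht' : 0 < t') :
    ∫ s in Set.Ioc (0 : ℝ) (min t t'), (Real.sqrt (t - s + (t' - s)))⁻¹
      = Real.sqrt (t + t') - Real.sqrt |t - t'| := by
  have hm : 0 ≤ min t t' := (lt_min ht ht').le
  have hc : Continuous (fun s : ℝ => -Real.sqrt (t - s + (t' - s))) := by fun_prop
  have hd : ∀ s ∈ Set.Ioo 0 (min t t'), HasDerivAt (fun s : ℝ => -Real.sqrt (t - s + (t' - s)))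
      (Real.sqrt (t - s + (t' - s)))⁻¹ s := by
    intro s hs
    have h1 := lt_min_iff.1 hs.2
    have hpos : 0 < t - s + (t' - s) := by linarith [h1.1, h1.2]
    have h := ((((hasDerivAt_id s).const_sub t).add ((hasDerivAt_id s).const_sub t')).sqrt
      hpos.ne').neg
    refine h.congr_deriv ?_
    have := Real.sqrt_pos.2 hpos
    simp
    field_simp
    norm_num
  have hint : IntervalIntegrable (fun s : ℝ => (Real.sqrt (t - s + (t' - s)))⁻¹) volume 0
      (min t t') := by
    rw [intervalIntegrable_iff_integrableOn_Ioc_of_le hm]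
    exact intervalIntegral.integrableOn_deriv_of_nonneg hc.continuousOn hd
      fun s _ => by positivity
  rw [← intervalIntegral.integral_of_le hm,
    intervalIntegral.integral_eq_sub_of_hasDerivAt_of_le hm hc.continuousOn hd hint]
  have : t - min t t' + (t' - min t t') = |t - t'| := by
    rcases le_total t t' with h | h
    · rw [min_eq_left h, abs_of_nonpos (by linarith)]
      ring
    · rw [min_eq_right h, abs_of_nonneg (by linarith)]
      ring
  rw [this]
  simp only [sub_zero]
  ring

lemma limCov_zero_eq (γ t t' : ℝ) (ht : 0 < t) (ht' : 0 < t') :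
    limCov γ t 0 t' 0 =
      (4 * γ / Real.sqrt (2 * Real.pi)) *
        (Real.sqrt t + Real.sqrt t' - Real.sqrt |t - t'|) := by
  have h1 : ∫ y in Set.Ioi (0 : ℝ), Psi t y 0 * Psi t' y 0 = 4 * ((Real.sqrt (2 * Real.pi))⁻¹ *
      (Real.sqrt t + Real.sqrt t' - Real.sqrt (t + t')) / 2) := by
    rw [← integral_tail_mul ht ht', ← integral_const_mul]
    congr 1
    ext y
    simp only [Psi, sub_zero, add_zero]
    ring
  have h2 : ∫ s in Set.Ioc (0 : ℝ) (min t t'),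
      ∫ y in Set.Ioi (0 : ℝ), neumannKer (t - s) y 0 * neumannKer (t' - s) y 0
      = 2 * (Real.sqrt (2 * Real.pi))⁻¹ * (Real.sqrt (t + t') - Real.sqrt |t - t'|) := by
    rw [← integral_time ht ht', ← integral_const_mul]
    -- drop the endpoint `s = min t t'`, where one of the kernels degenerates
    rw [integral_Ioc_eq_integral_Ioo, integral_Ioc_eq_integral_Ioo]
    refine setIntegral_congr_fun measurableSet_Ioo fun s hs => ?_
    have hs' := lt_min_iff.1 hs.2
    have hk : ∀ y, neumannKer (t - s) y 0 * neumannKer (t' - s) y 0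
        = 4 * (heatKer (t - s) y * heatKer (t' - s) y) := by
      intro y
      simp only [neumannKer, sub_zero, add_zero]
      ring
    simp only [hk]
    rw [integral_const_mul, integral_heatKer_mul (sub_pos.2 hs'.1) (sub_pos.2 hs'.2)]
    ring
  rw [limCov, h1, h2]
  ring

/-- The limiting covariance at the boundary `x = 0`:
`C_γ((t,0),(t',0)) = (4γ/√(2π))(√t + √t' − √|t−t'|)`, hence
`(2γ)⁻² C_γ((t,0),(t',0)) = γ⁻¹(2π)^{-1/2}(√t + √t' − √|t−t'|)`, the covariance of
`(2/π)^{1/4} γ^{-1/2}` times a fractional Brownian motion with Hurst parameter `1/4`. -/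
theorem limCov_at_zero (γ t t' : ℝ) (hγ : 0 < γ) (ht : 0 < t) (ht' : 0 < t') :
    limCov γ t 0 t' 0 =
      (4 * γ / Real.sqrt (2 * Real.pi)) *
        (Real.sqrt t + Real.sqrt t' - Real.sqrt |t - t'|) ∧
    (2 * γ) ^ (-2 : ℤ) * limCov γ t 0 t' 0 =
      γ⁻¹ * (Real.sqrt (2 * Real.pi))⁻¹ *
        (Real.sqrt t + Real.sqrt t' - Real.sqrt |t - t'|) := by
  have h := limCov_zero_eq γ t t' ht ht'
  refine ⟨h, ?_⟩
  rw [h, zpow_neg]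
  norm_cast
  field_simp
  ring
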